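/- arXiv:1704.05389 — 3 statements merged into one kernel-verified Lean document; each statement's English description precedes it below -/
import Mathlib

section
/- Let Λ₂, Λ₃ ∈ ℝ, let D = diag(0, Λ₂, Λ₃) be the 3×3 real diagonal matrix with these entries, let B be any 3×3 real matrix, and let E : ℝ → Matrix (Fin 3) (Fin 3) ℝ satisfy ‖E(t)‖ = O(t³) as t → 0. Then det(t·D + t²·B + E(t)) = B₀₀·Λ₂·Λ₃·t⁴ + O(t⁵) as t → 0, where B₀₀ is the (1,1)-entry of B. -/
open Asymptotics

attribute [local instance] Matrix.normedAddCommGroup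

/-!
For matrices of size `n`, homogeneity gives `det (t D + t² B) = tⁿ det (D + t B)`, and Jacobi's
formula gives `det (D + t B) = det D + t tr (adj D · B) + O(t²)`. Every entry of `t D + t² B` is
`O(t)`, so replacing one factor in a term of the Leibniz expansion by an entry of `E t` costs
`O(tⁿ⁻¹ t³)`. For `D = diag(0, Λ₂, Λ₃)` the determinant vanishes and `adj D = diag(Λ₂ Λ₃, 0, 0)`.
-/

section Jacobi

variable {n R : Type*} [Fintype n] [DecidableEq n] [CommRing R]

theorem trace_adjugate_mul_eq_sum_det_updateCol (A B : Matrix n n R) :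
    (A.adjugate * B).trace = ∑ j, (A.updateCol j (B.col j)).det := by
  refine Finset.sum_congr rfl fun j _ => ?_
  rw [← Matrix.cramer_apply, Matrix.cramer_eq_adjugate_mulVec]
  rfl

theorem prod_updateCol_apply (A : Matrix n n R) (j : n) (v : n → R) (σ : Equiv.Perm n) :
    ∏ i, A.updateCol j v (σ i) i = (∏ i ∈ Finset.univ.erase j, A (σ i) i) * v (σ j) := by
  rw [← Finset.prod_erase_mul _ _ (Finset.mem_univ j), Matrix.updateCol_self]
  congr 1
  exact Finset.prod_congr rfl fun i hi => Matrix.updateCol_ne (Finset.ne_of_mem_erase hi)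

open Polynomial in
theorem derivative_det (M : Matrix n n R[X]) :
    derivative M.det = (M.adjugate * M.map derivative).trace := by
  have leibniz (σ : Equiv.Perm n) : derivative (∏ i, M (σ i) i) =
      ∑ j, ∏ i, M.updateCol j ((M.map derivative).col j) (σ i) i := by
    simp only [derivative_prod_finset, prod_updateCol_apply, Matrix.col_apply, Matrix.map_apply]
  simp only [trace_adjugate_mul_eq_sum_det_updateCol, Matrix.det_apply]
  rw [Finset.sum_comm, map_sum]
  refine Finset.sum_congr rfl fun σ _ => ?_
  rw [← Finset.smul_sum, ← leibniz]
  exact map_zsmul derivative _ _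

open Polynomial in
theorem exists_det_add_smul_eq (A B : Matrix n n R) :
    ∃ q : R[X], ∀ t : R,
      (A + t • B).det = A.det + t * (A.adjugate * B).trace + t ^ 2 * q.eval t := by
  let M : Matrix n n R[X] := A.map C + (X : R[X]) • B.map C
  have eval_apply (t : R) : (evalRingHom t).mapMatrix M = A + t • B := by
    ext i j
    simp [M, mul_comm t]
  have eval_zero_derivative : (evalRingHom 0).mapMatrix (M.map derivative) = B := by
    ext i j
    simp [M]
  have det_eval (t : R) : M.det.eval t = (A + t • B).det := by
    rw [← eval_apply, ← RingHom.map_det, coe_evalRingHom]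
  have coeff_zero : M.det.coeff 0 = A.det := by
    rw [coeff_zero_eq_eval_zero, det_eval, zero_smul, add_zero]
  have coeff_one : M.det.divX.coeff 0 = (A.adjugate * B).trace := by
    calc M.det.divX.coeff 0 = evalRingHom 0 (derivative M.det) := by
          simp [← coeff_zero_eq_eval_zero, coeff_derivative]
      _ = (((evalRingHom 0).mapMatrix M).adjugate *
            (evalRingHom 0).mapMatrix (M.map derivative)).trace := by
          rw [derivative_det, AddMonoidHom.map_trace, ← RingHom.map_adjugate, ← map_mul]
          rfl
      _ = (A.adjugate * B).trace := by rw [eval_apply, eval_zero_derivative, zero_smul, add_zero]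
  have expansion :
      M.det = (M.det.divX.divX * X + C (A.adjugate * B).trace) * X + C A.det := by
    rw [← coeff_one, ← coeff_zero, divX_mul_X_add, divX_mul_X_add]
  refine ⟨M.det.divX.divX, fun t => ?_⟩
  rw [← det_eval, congrArg (eval t) expansion]
  simp only [eval_add, eval_mul, eval_X, eval_C]
  ring

theorem det_smul_add_sq_smul (t : R) (A B : Matrix n n R) :
    (t • A + t ^ 2 • B).det = t ^ Fintype.card n * (A + t • B).det := by
  rw [← Matrix.det_smul, smul_add, smul_smul, sq]

theorem trace_adjugate_diagonal_mul_of_eq_zero {d : n → R} {i : n} (hi : d i = 0)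
    (B : Matrix n n R) :
    ((Matrix.diagonal d).adjugate * B).trace = (∏ j ∈ Finset.univ.erase i, d j) * B i i := by
  simp only [Matrix.adjugate_diagonal, Matrix.trace, Matrix.diag_apply, Matrix.diagonal_mul]
  refine Fintype.sum_eq_single i fun j hj => ?_
  rw [Finset.prod_eq_zero (Finset.mem_erase.2 ⟨hj.symm, Finset.mem_univ i⟩) hi, zero_mul]

theorem trace_adjugate_diagonal_fin_three_mul (a b : R) (B : Matrix (Fin 3) (Fin 3) R) :
    ((Matrix.diagonal ![0, a, b]).adjugate * B).trace = B 0 0 * a * b := by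
  have erase_zero : (Finset.univ.erase 0 : Finset (Fin 3)) = {1, 2} := by decide
  rw [trace_adjugate_diagonal_mul_of_eq_zero (i := 0) rfl, erase_zero,
    Finset.prod_pair (by decide), mul_comm, ← mul_assoc]
  rfl

end Jacobi

section Asymptotics

variable {α ι n R 𝕜 : Type*} [NormedCommRing R] [NormedField 𝕜] {l : Filter α}

theorem isBigO_prod_sub_prod {s : Finset ι} {f g : ι → α → R} {w : ι → α → 𝕜} {ε : α → 𝕜}
    (hf : ∀ i ∈ s, f i =O[l] w i) (hg : ∀ i ∈ s, g i =O[l] w i)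
    (hfg : ∀ i ∈ s, (fun x => f i x - g i x) =O[l] fun x => ε x * w i x) :
    (fun x => ∏ i ∈ s, f i x - ∏ i ∈ s, g i x) =O[l] fun x => ε x * ∏ i ∈ s, w i x := by
  classical
  induction s using Finset.induction_on with
  | empty => simpa using isBigO_zero _ _
  | insert a s ha ih =>
    simp only [Finset.forall_mem_insert] at hf hg hfg
    have first_factor := hfg.1.mul (IsBigO.finsetProd hf.2)
    have other_factors := hg.1.mul (ih hf.2 hg.2 hfg.2)
    simp only [Finset.prod_insert ha]
    refine (first_factor.congr_right fun x => ?_).add (other_factors.congr_right fun x => ?_)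
      |>.congr_left fun x => ?_
    all_goals ring

theorem isBigO_det_sub_det [Fintype n] [DecidableEq n] {A B : α → Matrix n n R} {w : n → α → 𝕜}
    {ε : α → 𝕜} (hA : ∀ i j, (fun x => A x i j) =O[l] w j)
    (hB : ∀ i j, (fun x => B x i j) =O[l] w j)
    (hAB : ∀ i j, (fun x => A x i j - B x i j) =O[l] fun x => ε x * w j x) :
    (fun x => (A x).det - (B x).det) =O[l] fun x => ε x * ∏ j, w j x := by
  have leibniz (x : α) : (A x).det - (B x).det = ∑ σ : Equiv.Perm n,
      ((Equiv.Perm.sign σ : ℤ) : R) * (∏ j, A x (σ j) j - ∏ j, B x (σ j) j) := by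
    simp only [Matrix.det_apply', mul_sub, Finset.sum_sub_distrib]
  have leibniz_term (σ : Equiv.Perm n) :
      (fun x => ((Equiv.Perm.sign σ : ℤ) : R) * (∏ j, A x (σ j) j - ∏ j, B x (σ j) j))
        =O[l] fun x => ε x * ∏ j, w j x :=
    (isBigO_prod_sub_prod (fun j _ => hA (σ j) j) (fun j _ => hB (σ j) j)
      fun j _ => hAB (σ j) j).const_mul_left _
  simpa only [leibniz] using IsBigO.fun_sum fun σ (_ : σ ∈ Finset.univ) => leibniz_term σ

theorem isBigO_det_add_smul_sub [Fintype n] [DecidableEq n] (A B : Matrix n n 𝕜) :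
    (fun t : 𝕜 => (A + t • B).det - (A.det + t * (A.adjugate * B).trace))
      =O[nhds 0] fun t : 𝕜 => t ^ 2 := by
  obtain ⟨q, hq⟩ := exists_det_add_smul_eq A B
  have hq_bounded : (fun t => q.eval t) =O[nhds 0] fun _ => (1 : 𝕜) :=
    q.continuous.continuousAt.tendsto.isBigO_one 𝕜
  simpa [hq] using (isBigO_refl (fun t : 𝕜 => t ^ 2) (nhds 0)).mul hq_bounded

theorem isBigO_smul_add_sq_smul_apply {m : Type*} (A B : Matrix m n 𝕜) (i : m) (j : n) :
    (fun t : 𝕜 => (t • A + t ^ 2 • B) i j) =O[nhds 0] fun t : 𝕜 => t := by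
  have hA := (isBigO_refl (fun t : 𝕜 => t) (nhds 0)).const_mul_left (A i j)
  have hB := (isLittleO_pow_id (𝕜 := 𝕜) one_lt_two).isBigO.const_mul_left (B i j)
  refine (hA.add hB).congr_left fun t => ?_
  simp only [Matrix.add_apply, Matrix.smul_apply, smul_eq_mul, mul_comm]

theorem stmt2_general [Fintype n] [DecidableEq n] (D B : Matrix n n 𝕜) (E : 𝕜 → Matrix n n 𝕜)
    (hE : E =O[nhds 0] fun t : 𝕜 => t ^ 3) :
    (fun t : 𝕜 =>
        (t • D + t ^ 2 • B + E t).det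
          - (D.det * t ^ Fintype.card n
            + (D.adjugate * B).trace * t ^ (Fintype.card n + 1)))
      =O[nhds 0] fun t : 𝕜 => t ^ (Fintype.card n + 2) := by
  have hE_entry (i j : n) : (fun t => E t i j) =O[nhds 0] fun t : 𝕜 => t ^ 3 :=
    isBigO_pi.1 (isBigO_pi.1 hE i) j
  have hmain := isBigO_smul_add_sq_smul_apply D B
  have hperturb : (fun t : 𝕜 => (t • D + t ^ 2 • B + E t).det - (t • D + t ^ 2 • B).det)
      =O[nhds 0] fun t : 𝕜 => t ^ 2 * ∏ _j : n, t := by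
    refine isBigO_det_sub_det (fun i j => ?_) hmain fun i j => ?_
    · exact (hmain i j).add ((hE_entry i j).trans (isLittleO_pow_id (by norm_num)).isBigO)
    · simpa [← pow_succ] using hE_entry i j
  have htaylor := (isBigO_refl (fun t : 𝕜 => t ^ Fintype.card n) (nhds 0)).mul
    (isBigO_det_add_smul_sub D B)
  refine ((hperturb.congr_right fun t => ?_).add (htaylor.congr_right fun t => ?_)).congr_left
    fun t => ?_
  · rw [Finset.prod_const, Finset.card_univ, pow_add, mul_comm]
  · rw [pow_add]
  · rw [det_smul_add_sq_smul]
    ring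

end Asymptotics

/-- With `D = diag(0, Λ₂, Λ₃)`, `B` any `3×3` real matrix and
`‖E t‖ = O(t³)` as `t → 0`, one has
`det (t•D + t²•B + E t) = B₀₀ Λ₂ Λ₃ t⁴ + O(t⁵)` as `t → 0`
(equation (26) of the paper). -/
theorem stmt2 (Λ₂ Λ₃ : ℝ) (B : Matrix (Fin 3) (Fin 3) ℝ)
    (E : ℝ → Matrix (Fin 3) (Fin 3) ℝ)
    (hE : (fun t : ℝ => ‖E t‖) =O[nhds 0] fun t : ℝ => t ^ 3) :
    (fun t : ℝ =>
        (t • Matrix.diagonal ![0, Λ₂, Λ₃] + t ^ 2 • B + E t).det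
          - B 0 0 * Λ₂ * Λ₃ * t ^ 4)
      =O[nhds 0] fun t : ℝ => t ^ 5 := by
  simpa [-Matrix.adjugate_diagonal, trace_adjugate_diagonal_fin_three_mul, Fin.prod_univ_succ] using
    stmt2_general (Matrix.diagonal ![0, Λ₂, Λ₃]) B E hE.of_norm_left
end

section
/- Let σ : ℝ⁴ → ℝ⁴ be the linear map σ(x₁,x₂,x₃,x₄) = (−x₃, x₄, x₁, −x₂), and let Λ²σ be the induced linear map on the second exterior power Λ²(ℝ⁴). With e₁, e₂, e₃, e₄ the standard basis of ℝ⁴ and ω₁ = e₁∧e₂ + e₃∧e₄, ω₂ = e₁∧e₃ + e₄∧e₂, ω₃ = e₁∧e₄ + e₂∧e₃, one has Λ²σ(ω₁) = −ω₁, Λ²σ(ω₂) = ω₂, and Λ²σ(ω₃) = −ω₃. In particular Λ²σ acts on the span of ω₁, ω₂, ω₃ with eigenvalue −1 on span{ω₁, ω₃} and +1 on span{ω₂}. -/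
open ExteriorAlgebra

/-!
The map `σ` is a quarter turn on the pairs `(e₁, e₃)` and `(e₄, e₂)`. If `σ` is a quarter turn on
`(a, b)` and on `(c, d)`, then `Λ²σ` fixes `a ∧ b` and `c ∧ d` and interchanges `a ∧ c` with
`b ∧ d`, so it changes the sign of `a ∧ c - b ∧ d`; this is `ω₃` for the two pairs above, and `ω₁`
once the second pair is turned to `(e₂, -e₄)`, while `ω₂` is the sum of the two fixed bivectors.
-/

section

variable {R M : Type*} [CommRing R] [AddCommGroup M] [Module R M]

theorem ιMulti_pair (a b : M) : ιMulti R 2 ![a, b] = ι R a * ι R b := by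
  simp [ιMulti_apply]

theorem ι_mul_ι_mem_exteriorPower_two (a b : M) : ι R a * ι R b ∈ ⋀[R]^2 M := by
  rw [← ιMulti_pair]
  exact ιMulti_range R 2 ⟨_, rfl⟩

theorem ι_mul_ι_eq_neg_swap (a b : M) : ι R a * ι R b = -(ι R b * ι R a) :=
  eq_neg_of_add_eq_zero_left (ι_add_mul_swap a b)

theorem map_ι_mul_ι (σ : M →ₗ[R] M) (a b : M) :
    ExteriorAlgebra.map σ (ι R a * ι R b) = ι R (σ a) * ι R (σ b) := by
  rw [map_mul, map_apply_ι, map_apply_ι]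

/-- `σ` acts on the ordered pair `(a, b)` as a rotation by a right angle, taking `a` to `b` and `b`
to `-a`. -/
structure IsQuarterTurn (σ : M →ₗ[R] M) (a b : M) : Prop where
  map_fst : σ a = b
  map_snd : σ b = -a

namespace IsQuarterTurn

variable {σ : M →ₗ[R] M} {a b c d : M}

theorem turn (h : IsQuarterTurn σ a b) : IsQuarterTurn σ b (-a) where
  map_fst := h.map_snd
  map_snd := by rw [map_neg, h.map_fst]

theorem map_ι_mul_ι_self (h : IsQuarterTurn σ a b) :
    ExteriorAlgebra.map σ (ι R a * ι R b) = ι R a * ι R b := by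
  rw [map_ι_mul_ι, h.map_fst, h.map_snd, map_neg, mul_neg, ← ι_mul_ι_eq_neg_swap]

theorem map_ι_fst_mul_ι_fst (hab : IsQuarterTurn σ a b) (hcd : IsQuarterTurn σ c d) :
    ExteriorAlgebra.map σ (ι R a * ι R c) = ι R b * ι R d := by
  rw [map_ι_mul_ι, hab.map_fst, hcd.map_fst]

theorem map_ι_snd_mul_ι_snd (hab : IsQuarterTurn σ a b) (hcd : IsQuarterTurn σ c d) :
    ExteriorAlgebra.map σ (ι R b * ι R d) = ι R a * ι R c := by
  rw [hab.turn.map_ι_fst_mul_ι_fst hcd.turn, map_neg, map_neg, neg_mul_neg]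

theorem map_ι_mul_ι_sub (hab : IsQuarterTurn σ a b) (hcd : IsQuarterTurn σ c d) :
    ExteriorAlgebra.map σ (ι R a * ι R c - ι R b * ι R d) =
      -(ι R a * ι R c - ι R b * ι R d) := by
  rw [map_sub, hab.map_ι_fst_mul_ι_fst hcd, hab.map_ι_snd_mul_ι_snd hcd, neg_sub]

end IsQuarterTurn

theorem isQuarterTurn_single_zero_two {σ : (Fin 4 → R) →ₗ[R] (Fin 4 → R)}
    (hσ : ∀ x, σ x = ![-(x 2), x 3, x 0, -(x 1)]) :
    IsQuarterTurn σ (Pi.single 0 1) (Pi.single 2 1) := by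
  constructor <;> · rw [hσ]; ext i; fin_cases i <;> simp

theorem isQuarterTurn_single_three_one {σ : (Fin 4 → R) →ₗ[R] (Fin 4 → R)}
    (hσ : ∀ x, σ x = ![-(x 2), x 3, x 0, -(x 1)]) :
    IsQuarterTurn σ (Pi.single 3 1) (Pi.single 1 1) := by
  constructor <;> · rw [hσ]; ext i; fin_cases i <;> simp

variable (R) in
/-- The forms `ω₁`, `ω₂`, `ω₃` built from four vectors of a module; they span the self-dual 2-forms
when `e` is an oriented orthonormal basis of `ℝ⁴`. Wedge products are written as products in the
exterior algebra, and indices start at `0`, so that `ω₁` is `selfDualForm R e 0`. -/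
def selfDualForm (e : Fin 4 → M) : Fin 3 → ExteriorAlgebra R M :=
  ![ι R (e 0) * ι R (e 1) + ι R (e 2) * ι R (e 3),
    ι R (e 0) * ι R (e 2) + ι R (e 3) * ι R (e 1),
    ι R (e 0) * ι R (e 3) + ι R (e 1) * ι R (e 2)]

theorem selfDualForm_mem_exteriorPower_two (e : Fin 4 → M) (i : Fin 3) :
    selfDualForm R e i ∈ ⋀[R]^2 M := by
  fin_cases i <;>
    exact add_mem (ι_mul_ι_mem_exteriorPower_two _ _) (ι_mul_ι_mem_exteriorPower_two _ _)

variable {σ : M →ₗ[R] M} (e : Fin 4 → M)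

theorem map_selfDualForm_zero (h₀₂ : IsQuarterTurn σ (e 0) (e 2))
    (h₃₁ : IsQuarterTurn σ (e 3) (e 1)) :
    ExteriorAlgebra.map σ (selfDualForm R e 0) = -selfDualForm R e 0 := by
  have hω : selfDualForm R e 0 = ι R (e 0) * ι R (e 1) - ι R (e 2) * ι R (-e 3) := by
    rw [map_neg, mul_neg, sub_neg_eq_add]
    rfl
  rw [hω, h₀₂.map_ι_mul_ι_sub h₃₁.turn]

theorem map_selfDualForm_one (h₀₂ : IsQuarterTurn σ (e 0) (e 2))
    (h₃₁ : IsQuarterTurn σ (e 3) (e 1)) :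
    ExteriorAlgebra.map σ (selfDualForm R e 1) = selfDualForm R e 1 := by
  have hω : selfDualForm R e 1 = ι R (e 0) * ι R (e 2) + ι R (e 3) * ι R (e 1) := rfl
  rw [hω, map_add, h₀₂.map_ι_mul_ι_self, h₃₁.map_ι_mul_ι_self]

theorem map_selfDualForm_two (h₀₂ : IsQuarterTurn σ (e 0) (e 2))
    (h₃₁ : IsQuarterTurn σ (e 3) (e 1)) :
    ExteriorAlgebra.map σ (selfDualForm R e 2) = -selfDualForm R e 2 := by
  have hω : selfDualForm R e 2 = ι R (e 0) * ι R (e 3) - ι R (e 2) * ι R (e 1) := by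
    rw [ι_mul_ι_eq_neg_swap (e 2), sub_neg_eq_add]
    rfl
  rw [hω, h₀₂.map_ι_mul_ι_sub h₃₁]

theorem stmt4_general (h₀₂ : IsQuarterTurn σ (e 0) (e 2))
    (h₃₁ : IsQuarterTurn σ (e 3) (e 1)) :
    (selfDualForm R e 0 ∈ ⋀[R]^2 M ∧ selfDualForm R e 1 ∈ ⋀[R]^2 M ∧
      selfDualForm R e 2 ∈ ⋀[R]^2 M) ∧
    (ExteriorAlgebra.map σ (selfDualForm R e 0) = -selfDualForm R e 0 ∧
      ExteriorAlgebra.map σ (selfDualForm R e 1) = selfDualForm R e 1 ∧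
      ExteriorAlgebra.map σ (selfDualForm R e 2) = -selfDualForm R e 2) ∧
    (∀ v ∈ Submodule.span R {selfDualForm R e 0, selfDualForm R e 2},
      ExteriorAlgebra.map σ v = -v) ∧
    (∀ v ∈ Submodule.span R {selfDualForm R e 1}, ExteriorAlgebra.map σ v = v) := by
  have hω₁ := map_selfDualForm_zero e h₀₂ h₃₁
  have hω₂ := map_selfDualForm_one e h₀₂ h₃₁
  have hω₃ := map_selfDualForm_two e h₀₂ h₃₁
  have hmem := selfDualForm_mem_exteriorPower_two (R := R) e
  refine ⟨⟨hmem 0, hmem 1, hmem 2⟩, ⟨hω₁, hω₂, hω₃⟩, fun v hv ↦ ?_, fun v hv ↦ ?_⟩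
  · exact LinearMap.eqOn_span (f := (ExteriorAlgebra.map σ).toLinearMap) (g := -LinearMap.id)
      (by rintro _ (rfl | rfl) <;> assumption) hv
  · exact LinearMap.eqOn_span (f := (ExteriorAlgebra.map σ).toLinearMap) (g := LinearMap.id)
      (Set.eqOn_singleton.2 hω₂) hv

end

/-- Let `σ(x₁,x₂,x₃,x₄) = (−x₃, x₄, x₁, −x₂)` on `ℝ⁴` and let
`Λ²σ` be the induced map on the second exterior power (the restriction of the
functorial map `ExteriorAlgebra.map σ`, which preserves `⋀[ℝ]² (Fin 4 → ℝ)`).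
With `ω₁ = e₁∧e₂ + e₃∧e₄`, `ω₂ = e₁∧e₃ + e₄∧e₂`, `ω₃ = e₁∧e₄ + e₂∧e₃` one has
`Λ²σ ω₁ = −ω₁`, `Λ²σ ω₂ = ω₂`, `Λ²σ ω₃ = −ω₃`; in particular `Λ²σ` acts with
eigenvalue `−1` on `span{ω₁, ω₃}` and `+1` on `span{ω₂}`. -/
theorem stmt4 (σ : (Fin 4 → ℝ) →ₗ[ℝ] (Fin 4 → ℝ))
    (hσ : ∀ x : Fin 4 → ℝ, σ x = ![-(x 2), x 3, x 0, -(x 1)]) :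
    ∀ e : Fin 4 → (Fin 4 → ℝ), (∀ i, e i = Pi.single i 1) →
    ∀ w : (Fin 4 → ℝ) → (Fin 4 → ℝ) → ExteriorAlgebra ℝ (Fin 4 → ℝ),
      (∀ a b, w a b = ιMulti ℝ 2 ![a, b]) →
    ∀ ω₁ ω₂ ω₃ : ExteriorAlgebra ℝ (Fin 4 → ℝ),
      ω₁ = w (e 0) (e 1) + w (e 2) (e 3) →
      ω₂ = w (e 0) (e 2) + w (e 3) (e 1) →
      ω₃ = w (e 0) (e 3) + w (e 1) (e 2) →
    (ω₁ ∈ ⋀[ℝ]^2 (Fin 4 → ℝ) ∧ ω₂ ∈ ⋀[ℝ]^2 (Fin 4 → ℝ) ∧ ω₃ ∈ ⋀[ℝ]^2 (Fin 4 → ℝ)) ∧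
    (ExteriorAlgebra.map σ ω₁ = -ω₁ ∧
     ExteriorAlgebra.map σ ω₂ = ω₂ ∧
     ExteriorAlgebra.map σ ω₃ = -ω₃) ∧
    (∀ v ∈ Submodule.span ℝ ({ω₁, ω₃} : Set (ExteriorAlgebra ℝ (Fin 4 → ℝ))),
      ExteriorAlgebra.map σ v = -v) ∧
    (∀ v ∈ Submodule.span ℝ ({ω₂} : Set (ExteriorAlgebra ℝ (Fin 4 → ℝ))),
      ExteriorAlgebra.map σ v = v) := by
  rintro e he w hw _ _ _ rfl rfl rfl
  obtain rfl : e = fun i ↦ Pi.single i 1 := funext he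
  simp only [hw, ιMulti_pair]
  exact stmt4_general (fun i ↦ Pi.single i 1) (isQuarterTurn_single_zero_two hσ)
    (isQuarterTurn_single_three_one hσ)
end

section
/- Let E and F be real normed vector spaces, let S and O be subspaces of E with O finite-dimensional, let P : E → F be a continuous linear map, let L : O → O be an invertible continuous linear map with continuous inverse L⁻¹, and let C > 0, ε ≥ 0 be constants with ε·C·‖L⁻¹‖ ≤ 1/2. Assume that for all s ∈ S and x ∈ O: ‖s‖ + ‖L x‖ ≤ C·(‖P(s + x)‖ + ε·‖x‖). Then for all s ∈ S and x ∈ O: ‖s‖ + ‖x‖ ≤ 2·C·max(1, ‖L⁻¹‖)·‖P(s + x)‖; in particular P is injective on the subspace S + O (if s + x = s' + x' only when s = s', x = x'). -/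
/-!
Since `‖x‖ ≤ ‖L⁻¹‖ ‖L x‖`, the smallness of `ε C ‖L⁻¹‖` makes the error term `ε C ‖x‖` at most
`‖L x‖ / 2`, which is absorbed into the left-hand side at the price of doubling `C`. Replacing
`‖L x‖` by `‖x‖` then costs the factor `max 1 ‖L⁻¹‖`. The resulting lower bound
forces the kernel of `(s, x) ↦ P (s + x)` to vanish.
-/

open Function

theorem add_le_two_mul_of_add_le_add_mul {a b c x δ K : ℝ} (ha : 0 ≤ a) (hb : 0 ≤ b)
    (hδ : 0 ≤ δ) (hxb : x ≤ K * b) (hδK : δ * K ≤ 1 / 2) (h : a + b ≤ c + δ * x) :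
    a + b ≤ 2 * c := by
  have habsorb : δ * x ≤ 1 / 2 * b :=
    calc δ * x ≤ δ * (K * b) := by gcongr
      _ = δ * K * b := by ring
      _ ≤ 1 / 2 * b := by gcongr
  linarith

theorem add_le_max_one_mul_add {a b x K : ℝ} (ha : 0 ≤ a) (hb : 0 ≤ b) (hxb : x ≤ K * b) :
    a + x ≤ max 1 K * (a + b) :=
  calc a + x ≤ 1 * a + K * b := by rw [one_mul]; gcongr
    _ ≤ max 1 K * a + max 1 K * b := by
      gcongr
      exacts [le_max_left 1 K, le_max_right 1 K]
    _ = max 1 K * (a + b) := (mul_add _ _ _).symm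

theorem norm_add_norm_le_of_norm_add_norm_map_le {𝕜 X Y Z : Type*} [NontriviallyNormedField 𝕜]
    [SeminormedAddCommGroup X] [SeminormedAddCommGroup Y] [NormedSpace 𝕜 Y]
    [SeminormedAddCommGroup Z] [NormedSpace 𝕜 Z] (L : Y ≃L[𝕜] Z) {C ε p : ℝ}
    (hC : 0 ≤ C) (hε : 0 ≤ ε) (hsmall : ε * C * ‖(L.symm : Z →L[𝕜] Y)‖ ≤ 1 / 2)
    {x : X} {y : Y} (h : ‖x‖ + ‖L y‖ ≤ C * (p + ε * ‖y‖)) :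
    ‖x‖ + ‖y‖ ≤ 2 * C * max 1 ‖(L.symm : Z →L[𝕜] Y)‖ * p := by
  have hy : ‖y‖ ≤ ‖(L.symm : Z →L[𝕜] Y)‖ * ‖L y‖ := by
    simpa using (L.symm : Z →L[𝕜] Y).le_opNorm (L y)
  have habsorbed : ‖x‖ + ‖L y‖ ≤ 2 * (C * p) :=
    add_le_two_mul_of_add_le_add_mul (norm_nonneg x) (norm_nonneg (L y)) (mul_nonneg hε hC) hy
      hsmall (h.trans_eq (by ring))
  calc ‖x‖ + ‖y‖ ≤ max 1 ‖(L.symm : Z →L[𝕜] Y)‖ * (‖x‖ + ‖L y‖) :=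
        add_le_max_one_mul_add (norm_nonneg x) (norm_nonneg (L y)) hy
    _ ≤ max 1 ‖(L.symm : Z →L[𝕜] Y)‖ * (2 * (C * p)) := by gcongr
    _ = 2 * C * max 1 ‖(L.symm : Z →L[𝕜] Y)‖ * p := by ring

theorem injective_of_norm_add_norm_le_mul_norm {X Y F : Type*} [NormedAddCommGroup X]
    [NormedAddCommGroup Y] [SeminormedAddCommGroup F] (T : X × Y →+ F) {K : ℝ}
    (hT : ∀ x y, ‖x‖ + ‖y‖ ≤ K * ‖T (x, y)‖) : Injective T := by
  refine (injective_iff_map_eq_zero T).mpr fun ⟨x, y⟩ hxy => ?_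
  have hle : ‖x‖ + ‖y‖ ≤ 0 := by simpa only [hxy, norm_zero, mul_zero] using hT x y
  have hx : ‖x‖ ≤ 0 := (le_add_of_nonneg_right (norm_nonneg y)).trans hle
  have hy : ‖y‖ ≤ 0 := (le_add_of_nonneg_left (norm_nonneg x)).trans hle
  exact Prod.ext (norm_le_zero_iff.mp hx) (norm_le_zero_iff.mp hy)

theorem stmt7_general {𝕜 E F Z : Type*} [NontriviallyNormedField 𝕜]
    [NormedAddCommGroup E] [NormedSpace 𝕜 E] [SeminormedAddCommGroup F] [Module 𝕜 F]
    [SeminormedAddCommGroup Z] [NormedSpace 𝕜 Z]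
    (S O : Submodule 𝕜 E) (P : E →ₗ[𝕜] F) (L : O ≃L[𝕜] Z) {C ε : ℝ} (hC : 0 ≤ C) (hε : 0 ≤ ε)
    (hsmall : ε * C * ‖(L.symm : Z →L[𝕜] O)‖ ≤ 1 / 2)
    (hcoer : ∀ (s : S) (x : O), ‖s‖ + ‖L x‖ ≤ C * (‖P (s + x)‖ + ε * ‖x‖)) :
    (∀ (s : S) (x : O),
      ‖s‖ + ‖x‖ ≤ 2 * C * max 1 ‖(L.symm : Z →L[𝕜] O)‖ * ‖P (s + x)‖) ∧
    (∀ (s s' : S) (x x' : O), P (s + x) = P (s' + x') → s = s' ∧ x = x') := by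
  have hbound (s : S) (x : O) :
      ‖s‖ + ‖x‖ ≤ 2 * C * max 1 ‖(L.symm : Z →L[𝕜] O)‖ * ‖P (s + x)‖ :=
    norm_add_norm_le_of_norm_add_norm_map_le L hC hε hsmall (hcoer s x)
  let T : S × O →ₗ[𝕜] F := P ∘ₗ S.subtype.coprod O.subtype
  have hinj : Injective T := injective_of_norm_add_norm_le_mul_norm T.toAddMonoidHom hbound
  exact ⟨hbound, fun s s' x x' h => Prod.mk.inj (hinj (a₁ := (s, x)) (a₂ := (s', x')) h)⟩

/-- Abstract coercivity lemma behind Lemma 2 of the paper: given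
subspaces `S`, `O ⊆ E` with `O` finite dimensional, a continuous linear map
`P : E → F`, an invertible continuous linear map `L : O → O`, constants
`C > 0`, `ε ≥ 0` with `ε·C·‖L⁻¹‖ ≤ 1/2`, and the estimate
`‖s‖ + ‖L x‖ ≤ C (‖P (s+x)‖ + ε ‖x‖)` for all `s ∈ S`, `x ∈ O`, one gets
`‖s‖ + ‖x‖ ≤ 2 C max(1, ‖L⁻¹‖) ‖P (s+x)‖`; in particular `P` is injective on
`S + O`. -/
theorem stmt7 {E F : Type*} [NormedAddCommGroup E] [NormedSpace ℝ E]
    [NormedAddCommGroup F] [NormedSpace ℝ F]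
    (S O : Submodule ℝ E) [FiniteDimensional ℝ O]
    (P : E →L[ℝ] F) (L : O ≃L[ℝ] O) (C ε : ℝ) (hC : 0 < C) (hε : 0 ≤ ε)
    (hsmall : ε * C * ‖(L.symm : O →L[ℝ] O)‖ ≤ 1 / 2)
    (hcoer : ∀ (s : S) (x : O),
      ‖(s : E)‖ + ‖(L x : E)‖ ≤ C * (‖P ((s : E) + (x : E))‖ + ε * ‖(x : E)‖)) :
    (∀ (s : S) (x : O),
      ‖(s : E)‖ + ‖(x : E)‖
        ≤ 2 * C * max 1 ‖(L.symm : O →L[ℝ] O)‖ * ‖P ((s : E) + (x : E))‖) ∧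
    (∀ (s s' : S) (x x' : O),
      P ((s : E) + (x : E)) = P ((s' : E) + (x' : E)) → s = s' ∧ x = x') :=
  stmt7_general S O P.toLinearMap L hC.le hε hsmall hcoer
end
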